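/- arXiv:1412.3438 — 4 statements merged into one kernel-verified Lean document; each statement's English description precedes it below -/
import Mathlib

section
/- Let N ≥ 1, let 1 < p < ∞, let C₁, C₂ > 0 and C₁⁰, C₂⁰ ∈ ℝ, and let j : ℝ^N → ℝ be a convex function satisfying C₁|r|^p + C₁⁰ ≤ j(r) ≤ C₂|r|^p + C₂⁰ for all r ∈ ℝ^N. Then there exist constants C₃ > 0 and C₃⁰ ≥ 0, depending only on p, C₁, C₂, C₁⁰, C₂⁰ (and not on j or r), such that for every r ∈ ℝ^N and every ξ ∈ ∂j(r) one has |ξ| ≤ C₃ |r|^{p−1} + C₃⁰. -/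
open scoped RealInnerProductSpace

/-- If `j : ℝ^N → ℝ` is convex and satisfies `C₁|r|^p + C₁⁰ ≤ j r ≤ C₂|r|^p + C₂⁰`,
then every subgradient `ξ ∈ ∂j(r)` satisfies `|ξ| ≤ C₃|r|^{p-1} + C₃⁰`, with constants
independent of `j` and `r`. -/
theorem subgradient_growth_bound (N : ℕ) (hN : 1 ≤ N) (p : ℝ) (hp : 1 < p)
    (C1 C2 C10 C20 : ℝ) (hC1 : 0 < C1) (hC2 : 0 < C2) :
    ∃ C3 C30 : ℝ, 0 < C3 ∧ 0 ≤ C30 ∧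
      ∀ j : EuclideanSpace ℝ (Fin N) → ℝ,
        ConvexOn ℝ Set.univ j →
        (∀ r, C1 * ‖r‖ ^ p + C10 ≤ j r ∧ j r ≤ C2 * ‖r‖ ^ p + C20) →
        ∀ r ξ : EuclideanSpace ℝ (Fin N),
          (∀ s, j r + ⟪ξ, s - r⟫ ≤ j s) →
          ‖ξ‖ ≤ C3 * ‖r‖ ^ (p - 1) + C30 := by
  have hK : 0 < C2 * 2 ^ p := by positivity
  refine ⟨C2 * 2 ^ p, C2 * 2 ^ p + |C20 - C10|, hK, by positivity, ?_⟩
  intro j _ hj r ξ hξ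
  have hrp : 0 ≤ ‖r‖ ^ (p - 1) := by positivity
  by_cases h0 : ξ = 0
  · subst h0
    rw [norm_zero]
    positivity
  have hn : 0 < ‖ξ‖ := norm_pos_iff.mpr h0
  obtain ⟨R, hR1, hRr, hRp⟩ : ∃ R : ℝ, 1 ≤ R ∧ ‖r‖ ≤ R ∧ R ^ (p - 1) ≤ ‖r‖ ^ (p - 1) + 1 := by
    rcases le_total ‖r‖ 1 with h | h
    · exact ⟨1, le_rfl, h, by rw [Real.one_rpow]; linarith⟩
    · exact ⟨‖r‖, h, le_rfl, by linarith⟩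
  have hR0 : 0 < R := by linarith
  have h1 := hξ (r + (R / ‖ξ‖) • ξ)
  have hin : ⟪ξ, r + (R / ‖ξ‖) • ξ - r⟫ = R * ‖ξ‖ := by
    rw [add_sub_cancel_left, real_inner_smul_right, real_inner_self_eq_norm_sq]
    field_simp
  rw [hin] at h1
  have hs : ‖r + (R / ‖ξ‖) • ξ‖ ≤ 2 * R := by
    refine (norm_add_le _ _).trans ?_
    rw [norm_smul, Real.norm_of_nonneg (by positivity), div_mul_cancel₀ _ hn.ne']
    linarith
  have hsp : ‖r + (R / ‖ξ‖) • ξ‖ ^ p ≤ 2 ^ p * (R ^ (p - 1) * R) := by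
    refine (Real.rpow_le_rpow (norm_nonneg _) hs (by linarith)).trans ?_
    rw [Real.mul_rpow (by norm_num) hR0.le, Real.rpow_sub_one hR0.ne', div_mul_cancel₀ _ hR0.ne']
  have h2 := (hj (r + (R / ‖ξ‖) • ξ)).2
  have h3 := (hj r).1
  have h4 : 0 ≤ C1 * ‖r‖ ^ p := by positivity
  have h5 := mul_le_mul_of_nonneg_left hsp hC2.le
  have h6 : C20 - C10 ≤ |C20 - C10| * R :=
    (le_abs_self _).trans (le_mul_of_one_le_right (abs_nonneg _) hR1)
  have h7 : ‖ξ‖ * R ≤ (C2 * 2 ^ p * R ^ (p - 1) + |C20 - C10|) * R := by linarith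
  have h8 := le_of_mul_le_mul_right h7 hR0
  have h9 := mul_le_mul_of_nonneg_left hRp hK.le
  linarith
end

section
/- Let N ≥ 1, let 1 < p < ∞ with conjugate exponent p′ = p/(p−1), let (Ω, μ) be a measure space with μ(Ω) < ∞, let C₁, C₂ > 0 and C₁⁰, C₂⁰ ∈ ℝ, and let j : Ω × ℝ^N → ℝ be such that for μ-a.e. x ∈ Ω the function j(x, ·) is convex and satisfies C₁|r|^p + C₁⁰ ≤ j(x, r) ≤ C₂|r|^p + C₂⁰ for all r ∈ ℝ^N. Let w : Ω → ℝ^N be measurable with ∫_Ω |w(x)|^p dμ(x) < ∞, and let η : Ω → ℝ^N be measurable with η(x) ∈ ∂j(x, ·)(w(x)) for μ-a.e. x. Then ∫_Ω |η(x)|^{p′} dμ(x) < ∞. -/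
open scoped RealInnerProductSpace
open MeasureTheory

/-- If `j(x,·)` is convex with `C₁|r|^p + C₁⁰ ≤ j(x,r) ≤ C₂|r|^p + C₂⁰` a.e. on a finite
measure space, `w` is measurable with `∫ |w|^p < ∞`, and `η(x) ∈ ∂j(x,·)(w(x))` a.e.,
then `∫ |η|^{p'} < ∞` where `p' = p/(p-1)`. -/
theorem subgradient_selection_Lp' (N : ℕ) (hN : 1 ≤ N) (p : ℝ) (hp : 1 < p)
    {Ω : Type*} [MeasurableSpace Ω] (μ : Measure Ω) [IsFiniteMeasure μ]
    (C1 C2 C10 C20 : ℝ) (hC1 : 0 < C1) (hC2 : 0 < C2)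
    (j : Ω → EuclideanSpace ℝ (Fin N) → ℝ)
    (hj : ∀ᵐ x ∂μ, ConvexOn ℝ Set.univ (j x) ∧
      ∀ r, C1 * ‖r‖ ^ p + C10 ≤ j x r ∧ j x r ≤ C2 * ‖r‖ ^ p + C20)
    (w η : Ω → EuclideanSpace ℝ (Fin N))
    (hw : Measurable w) (hwint : Integrable (fun x => ‖w x‖ ^ p) μ)
    (hη : Measurable η)
    (hsub : ∀ᵐ x ∂μ, ∀ s, j x (w x) + ⟪η x, s - w x⟫ ≤ j x s) :
    Integrable (fun x => ‖η x‖ ^ (p / (p - 1))) μ := by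
  have hp0 : 0 < p := by linarith
  have hp1 : 0 < p - 1 := by linarith
  obtain ⟨K, hK⟩ : ∃ K : ℝ, K = C2 * 2 ^ p + |C20 - C10| := ⟨_, rfl⟩
  have hK0 : 0 ≤ K := by rw [hK]; positivity
  have hbound : Integrable
      (fun x => K ^ (p / (p - 1)) * (2 ^ p * (‖w x‖ ^ p + 1))) μ :=
    ((hwint.add (integrable_const 1)).const_mul _).const_mul _
  refine hbound.mono' ((hη.norm.pow_const _).aestronglyMeasurable) ?_
  filter_upwards [hj, hsub] with x hx hs
  obtain ⟨-, hx⟩ := hx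
  rw [Real.norm_of_nonneg (by positivity)]
  obtain ⟨R, hR⟩ : ∃ R : ℝ, R = ‖w x‖ + 1 := ⟨_, rfl⟩
  have hR1 : 1 ≤ R := by rw [hR]; linarith [norm_nonneg (w x)]
  have hR0 : 0 < R := by linarith
  have hRp : 1 ≤ R ^ p := Real.one_le_rpow hR1 hp0.le
  have key : ‖η x‖ ≤ K * R ^ (p - 1) := by
    by_cases h0 : ‖η x‖ = 0
    · rw [h0]; positivity
    have h1 := hs (w x + (R / ‖η x‖) • η x)
    have h2 := (hx (w x + (R / ‖η x‖) • η x)).2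
    have h3 := (hx (w x)).1
    have h4 : 0 ≤ C1 * ‖w x‖ ^ p := by positivity
    rw [add_sub_cancel_left, real_inner_smul_right, real_inner_self_eq_norm_sq] at h1
    have h5 : R / ‖η x‖ * ‖η x‖ ^ 2 = R * ‖η x‖ := by field_simp
    rw [h5] at h1
    have h6 : ‖w x + (R / ‖η x‖) • η x‖ ≤ 2 * R := by
      refine (norm_add_le _ _).trans ?_
      rw [norm_smul, Real.norm_of_nonneg (by positivity), div_mul_cancel₀ _ h0]
      linarith
    have h7 : ‖w x + (R / ‖η x‖) • η x‖ ^ p ≤ 2 ^ p * R ^ p := by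
      rw [← Real.mul_rpow (by norm_num) hR0.le]
      exact Real.rpow_le_rpow (norm_nonneg _) h6 hp0.le
    have h8 := mul_le_mul_of_nonneg_left h7 hC2.le
    have h9 : C20 - C10 ≤ |C20 - C10| * R ^ p :=
      (le_abs_self _).trans (le_mul_of_one_le_right (abs_nonneg _) hRp)
    have h10 : R * ‖η x‖ ≤ R * (K * R ^ (p - 1)) := by
      have : R * (K * R ^ (p - 1)) = K * R ^ p := by
        rw [Real.rpow_sub_one hR0.ne']; field_simp
      rw [this, hK]; linarith
    exact le_of_mul_le_mul_left h10 hR0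
  have hq : 0 ≤ p / (p - 1) := by positivity
  calc ‖η x‖ ^ (p / (p - 1)) ≤ (K * R ^ (p - 1)) ^ (p / (p - 1)) :=
        Real.rpow_le_rpow (norm_nonneg _) key hq
    _ = K ^ (p / (p - 1)) * R ^ p := by
        rw [Real.mul_rpow hK0 (by positivity), ← Real.rpow_mul hR0.le,
          mul_div_cancel₀ _ hp1.ne']
    _ ≤ _ := by
        refine mul_le_mul_of_nonneg_left ?_ (by positivity)
        rcases le_total ‖w x‖ 1 with h | h
        · have a : R ^ p ≤ 2 ^ p := Real.rpow_le_rpow hR0.le (by linarith) hp0.le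
          have b : (0:ℝ) ≤ 2 ^ p * ‖w x‖ ^ p := by positivity
          linarith
        · have a : R ^ p ≤ (2 * ‖w x‖) ^ p := Real.rpow_le_rpow hR0.le (by linarith) hp0.le
          rw [Real.mul_rpow (by norm_num) (norm_nonneg _)] at a
          have b : (0:ℝ) ≤ 2 ^ p := by positivity
          linarith
end

section
/- Let N ≥ 1, let ι be a nonempty index set, and let j : ι × ℝ^N → ℝ be such that for every i ∈ ι the function j(i, ·) is convex, j(i, 0) = 0 and j(i, r) ≥ 0 for all r. Suppose that for each i the Fenchel conjugate j*(i, ω) = sup_{s ∈ ℝ^N} (⟨ω, s⟩ − j(i, s)) is finite for every ω ∈ ℝ^N, and assume the uniform superlinearity of the conjugates: for every A > 0 there exists R > 0 such that j*(i, ω) ≥ A|ω| whenever i ∈ ι and |ω| ≥ R. Then for every M > 0 there exists a constant Y_M > 0 such that: whenever i ∈ ι, r, ω ∈ ℝ^N, ω ∈ ∂j(i, ·)(r) and |r| ≤ M, one has |ω| ≤ Y_M. -/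
open scoped RealInnerProductSpace

/-- Uniform superlinearity of the Fenchel conjugates `j*(i,·)` implies a uniform bound:
if `ω ∈ ∂j(i,·)(r)` and `|r| ≤ M`, then `|ω| ≤ Y_M`. -/
theorem superlinear_conjugate_bounded (N : ℕ) (hN : 1 ≤ N) {ι : Type*} [Nonempty ι]
    (j : ι → EuclideanSpace ℝ (Fin N) → ℝ)
    (hconv : ∀ i, ConvexOn ℝ Set.univ (j i)) (h0 : ∀ i, j i 0 = 0)
    (hnn : ∀ i r, 0 ≤ j i r)
    (hbdd : ∀ i (ω : EuclideanSpace ℝ (Fin N)),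
      BddAbove (Set.range fun s : EuclideanSpace ℝ (Fin N) => ⟪ω, s⟫ - j i s))
    (hsup : ∀ A > (0:ℝ), ∃ R > (0:ℝ), ∀ i (ω : EuclideanSpace ℝ (Fin N)), R ≤ ‖ω‖ →
      A * ‖ω‖ ≤ ⨆ s : EuclideanSpace ℝ (Fin N), (⟪ω, s⟫ - j i s)) :
    ∀ M > (0:ℝ), ∃ Y > (0:ℝ),
      ∀ i (r ω : EuclideanSpace ℝ (Fin N)),
        (∀ s, j i r + ⟪ω, s - r⟫ ≤ j i s) → ‖r‖ ≤ M → ‖ω‖ ≤ Y := by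
  intro M hM
  obtain ⟨R, hR, h⟩ := hsup (M + 1) (by linarith)
  refine ⟨R, hR, fun i r ω hs hr => ?_⟩
  by_contra hc
  have hc' : R < ‖ω‖ := not_le.mp hc
  have h1 := h i ω hc'.le
  have h2 : (⨆ s : EuclideanSpace ℝ (Fin N), (⟪ω, s⟫ - j i s)) ≤ ⟪ω, r⟫ - j i r := by
    apply ciSup_le
    intro s
    have h3 := hs s
    rw [inner_sub_right] at h3
    linarith
  have h4 : ⟪ω, r⟫ ≤ ‖ω‖ * ‖r‖ := real_inner_le_norm ω r
  have h5 : ‖ω‖ * ‖r‖ ≤ ‖ω‖ * M := mul_le_mul_of_nonneg_left hr (norm_nonneg ω)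
  have h6 := hnn i r
  linarith
end

section
/- (Lemma 4.1) Let N ≥ 1, let (Ω, μ) be a measure space with μ(Ω) < ∞, and let j : Ω × ℝ^N → ℝ be such that for μ-a.e. x the function j(x, ·) is convex and nonnegative, and denote by j*(x, ω) = sup_{s ∈ ℝ^N} (⟨ω, s⟩ − j(x, s)) ∈ ℝ ∪ {+∞} its pointwise Fenchel conjugate. Let u, w : Ω → ℝ^N be Bochner integrable functions such that x ↦ j(x, u(x)) is integrable on Ω, j*(x, w(x)) < ∞ for μ-a.e. x, and x ↦ j*(x, w(x)) is integrable on Ω. Assume the symmetry condition: there exist constants γ₁ > 0 and γ₂ ≥ 0 such that j(x, r) ≤ γ₁ j(x, −r) + γ₂ for μ-a.e. x and all r ∈ ℝ^N. Then the function x ↦ ⟨u(x), w(x)⟩ is integrable on Ω. -/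
open scoped RealInnerProductSpace
open MeasureTheory

/-- (Lemma 4.1) If `j(x,·)` is a.e. convex and nonnegative, `u, w` are Bochner integrable,
`j(·,u(·))` is integrable, `j*(·,w(·))` is a.e. finite and integrable, and `j` satisfies the
symmetry condition `j(x,r) ≤ γ₁ j(x,-r) + γ₂`, then `x ↦ ⟨u(x), w(x)⟩` is integrable. -/
theorem inner_integrable_of_fenchel (N : ℕ) (hN : 1 ≤ N)
    {Ω : Type*} [MeasurableSpace Ω] (μ : Measure Ω) [IsFiniteMeasure μ]
    (j : Ω → EuclideanSpace ℝ (Fin N) → ℝ)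
    (hj : ∀ᵐ x ∂μ, ConvexOn ℝ Set.univ (j x) ∧ ∀ r, 0 ≤ j x r)
    (u w : Ω → EuclideanSpace ℝ (Fin N))
    (hu : Integrable u μ) (hw : Integrable w μ)
    (hju : Integrable (fun x => j x (u x)) μ)
    (hfin : ∀ᵐ x ∂μ, BddAbove
      (Set.range fun s : EuclideanSpace ℝ (Fin N) => ⟪w x, s⟫ - j x s))
    (hjw : Integrable
      (fun x => ⨆ s : EuclideanSpace ℝ (Fin N), (⟪w x, s⟫ - j x s)) μ)
    (γ1 γ2 : ℝ) (hγ1 : 0 < γ1) (hγ2 : 0 ≤ γ2)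
    (hsym : ∀ᵐ x ∂μ, ∀ r, j x r ≤ γ1 * j x (-r) + γ2) :
    Integrable (fun x => ⟪u x, w x⟫) μ := by
  have hb : Integrable (fun x => ‖⨆ s : EuclideanSpace ℝ (Fin N), (⟪w x, s⟫ - j x s)‖
      + ((1 + γ1) * j x (u x) + γ2)) μ :=
    hjw.norm.add ((hju.const_mul _).add (integrable_const γ2))
  refine hb.mono' (hu.aestronglyMeasurable.inner hw.aestronglyMeasurable) ?_
  filter_upwards [hj, hfin, hsym] with x h1 h2 h3
  have a := le_ciSup h2 (u x)
  have b := le_ciSup h2 (-u x)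
  have c := h3 (-u x)
  have d := h1.2 (u x)
  have e := mul_nonneg hγ1.le d
  have f := le_abs_self (⨆ s : EuclideanSpace ℝ (Fin N), (⟪w x, s⟫ - j x s))
  simp only [inner_neg_right, neg_neg] at a b c
  rw [real_inner_comm, Real.norm_eq_abs, Real.norm_eq_abs, abs_le]
  constructor <;> linarith
end
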